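/- Let M be a symmetric matrix with entries in {0,1,*}, indexed by a finite set D, let S ⊆ D, and let k be an integer with k > |D|. Let ℓ = |{i ∈ S : M_{i,i} = 1}|. Consider the functions σ : {1,…,k} → D whose image is exactly S and which satisfy M_{σ(u),σ(v)} ∈ {0,*} for all distinct u, v ∈ {1,…,k} (these are the S-surjective M-partitions of the empty graph on k vertices). If ℓ = |S|, or there exist distinct i, j ∈ S with M_{i,j} = 1, then there are no such functions. Otherwise, the number of such functions is exactly k⁽ℓ⁾ · (|S|−ℓ)! · S(k−ℓ, |S|−ℓ). -/

import Mathlib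

/-- The three possible entries `0`, `1`, `*` of a matrix-partition matrix. -/
inductive Entry : Type
  | zero | one | star
deriving DecidableEq

/-- Stirling numbers of the second kind: `stirling2 n k` is the number of
partitions of an `n`-element set into `k` nonempty blocks. -/
def stirling2 : ℕ → ℕ → ℕ
  | 0, 0 => 1
  | 0, _ + 1 => 0
  | _ + 1, 0 => 0
  | n + 1, k + 1 => (k + 1) * stirling2 n (k + 1) + stirling2 n k

def PP {D : Type} (k : ℕ) (A B : Set D) (σ : Fin k → D) : Prop :=
  Set.range σ = A ∪ B ∧ ∀ u v, σ u = σ v → σ u ∈ A → u = v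

lemma PP_cons {D : Type} (k : ℕ) (A B : Set D) (d : D) (τ : Fin k → D) :
    PP (k+1) A B (Fin.cons d τ : Fin (k+1) → D) ↔
      (insert d (Set.range τ) = A ∪ B ∧ (∀ u v, τ u = τ v → τ u ∈ A → u = v) ∧
        (d ∈ A → d ∉ Set.range τ)) := by
  unfold PP
  rw [Fin.range_cons]
  refine and_congr_right fun _ => ?_
  constructor
  · intro h
    refine ⟨fun u v h1 h2 => ?_, ?_⟩
    · have := h u.succ v.succ (by simpa using h1) (by simpa using h2)
      simpa using this
    · rintro hd ⟨u, rfl⟩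
      have := h 0 u.succ (by simp) (by simpa using hd)
      exact absurd this (Fin.succ_ne_zero u).symm
  · rintro ⟨h1, h2⟩ u v
    refine Fin.cases ?_ (fun u => ?_) u <;> refine Fin.cases ?_ (fun v => ?_) v
    · simp
    · simp only [Fin.cons_zero, Fin.cons_succ]
      intro h h3
      exact absurd ⟨v, h.symm⟩ (h2 h3)
    · simp only [Fin.cons_zero, Fin.cons_succ]
      intro h h3
      exact absurd ⟨u, h⟩ (h2 (h ▸ h3))
    · simp only [Fin.cons_succ]
      intro h h3
      rw [h1 u v h h3]

lemma PP_cons_A {D : Type} (k : ℕ) (A B : Set D) (hAB : Disjoint A B) (d : D) (hd : d ∈ A)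
    (τ : Fin k → D) :
    PP (k+1) A B (Fin.cons d τ : Fin (k+1) → D) ↔ PP k (A \ {d}) B τ := by
  rw [PP_cons]
  have hdB : d ∉ B := fun h => Set.disjoint_left.1 hAB hd h
  unfold PP
  constructor
  · rintro ⟨h1, h2, h3⟩
    refine ⟨?_, fun u v h h' => h2 u v h h'.1⟩
    have h3 := h3 hd
    ext x
    have := Set.ext_iff.1 h1 x
    by_cases hx : x = d
    · subst hx; simp_all
    · simp only [Set.mem_insert_iff, hx, false_or, Set.mem_union] at this
      simp [hx, ← this]
  · rintro ⟨h1, h2⟩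
    have h3 : d ∉ Set.range τ := by rw [h1]; simp [hdB]
    refine ⟨?_, fun u v h h' => h2 u v h ⟨h', fun h4 => h3 ⟨u, h4⟩⟩, fun _ => h3⟩
    rw [h1]
    ext x
    by_cases hx : x = d
    · subst hx; simp [hd]
    · simp [hx]

lemma PP_cons_B {D : Type} (k : ℕ) (A B : Set D) (hAB : Disjoint A B) (d : D) (hd : d ∈ B)
    (τ : Fin k → D) :
    PP (k+1) A B (Fin.cons d τ : Fin (k+1) → D) ↔ (PP k A B τ ∨ PP k A (B \ {d}) τ) := by
  rw [PP_cons]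
  have hdA : d ∉ A := fun h => Set.disjoint_left.1 hAB h hd
  unfold PP
  rw [← or_and_right]
  simp only [hdA, false_imp_iff, and_true]
  refine and_congr_left fun _ => ?_
  constructor
  · intro h1
    by_cases hr : d ∈ Set.range τ
    · left; rwa [Set.insert_eq_of_mem hr] at h1
    · right
      ext x
      have := Set.ext_iff.1 h1 x
      by_cases hx : x = d
      · subst hx; simp_all
      · simp only [Set.mem_insert_iff, hx, false_or, Set.mem_union] at this
        simp [hx, ← this]
  · rintro (h1 | h1) <;> rw [h1] <;> ext x <;> by_cases hx : x = d
    · subst hx; simp [hd]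
    · simp [hx]
    · subst hx; simp [hd]
    · simp [hx]

def FF (k m l : ℕ) : ℕ := k.descFactorial l * m.factorial * stirling2 (k - l) m

lemma FF_rec (k m l : ℕ) : FF (k+1) m l =
    l * FF k m (l-1) + m * (FF k m l + FF k (m-1) l) := by
  unfold FF
  rcases lt_or_ge k l with h | h
  · obtain ⟨l, rfl⟩ : ∃ l', l = l' + 1 := ⟨l - 1, by omega⟩
    have e : k + 1 - (l+1) = k - l := by omega
    rw [Nat.descFactorial_of_lt h, e]
    simp only [Nat.add_sub_cancel, Nat.succ_descFactorial_succ, zero_mul, add_zero, mul_zero]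
    rcases Nat.lt_or_ge k l with h' | h'
    · simp [Nat.descFactorial_of_lt h']
    · have : k = l := by omega
      subst this; ring
  · have key : (k+1).descFactorial l = l * k.descFactorial (l-1) + k.descFactorial l := by
      cases l with
      | zero => simp
      | succ l =>
        rw [Nat.succ_descFactorial_succ, Nat.descFactorial_succ, Nat.add_sub_cancel]
        have : k + 1 = (l + 1) + (k - l) := by omega
        conv_lhs => rw [this]
        have e : l + 1 + (k-l) - 1 = k := by omega
        ring
    have e : k + 1 - l = (k - l) + 1 := by omega
    have e2 : l * (k.descFactorial (l-1) * m.factorial * stirling2 (k-(l-1)) m) =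
        l * k.descFactorial (l-1) * m.factorial * stirling2 (k-l+1) m := by
      cases l with
      | zero => simp
      | succ l =>
        have : k - (l+1) + 1 = k - l := by omega
        rw [this, Nat.add_sub_cancel]; ring
    rw [e2, key, e]
    cases m with
    | zero => simp [stirling2]
    | succ m =>
      simp only [stirling2, Nat.add_sub_cancel, Nat.factorial_succ]
      ring

lemma card_cons {D : Type} [Fintype D] (k : ℕ) (P : (Fin (k+1) → D) → Prop) :
    Nat.card {σ // P σ} = ∑ d : D, Nat.card {τ : Fin k → D // P (Fin.cons d τ)} := by
  rw [← Nat.card_sigma]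
  refine Nat.card_congr
    { toFun := fun σ => ⟨σ.1 0, Fin.tail σ.1, by rw [Fin.cons_self_tail]; exact σ.2⟩
      invFun := fun x => ⟨Fin.cons x.1 x.2.1, x.2.2⟩
      left_inv := fun σ => Subtype.ext (Fin.cons_self_tail _)
      right_inv := fun x => rfl }

lemma count {D : Type} [Fintype D] (k : ℕ) : ∀ (A B : Set D), Disjoint A B →
    Nat.card {σ : Fin k → D // PP k A B σ} = FF k B.ncard A.ncard := by
  classical
  induction k with
  | zero =>
    intro A B hAB
    by_cases h : A = ∅ ∧ B = ∅
    · obtain ⟨rfl, rfl⟩ := h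
      have : ∀ σ : Fin 0 → D, PP 0 (∅ : Set D) ∅ σ := fun σ => ⟨by simp, by simp⟩
      simp [FF, stirling2, this]
    · have : ∀ σ : Fin 0 → D, ¬ PP 0 A B σ := by
        rintro σ ⟨h1, -⟩
        rw [Set.range_eq_empty, eq_comm, Set.union_empty_iff] at h1
        exact h h1
      simp only [this, FF]
      rw [Nat.card_of_isEmpty]
      by_cases hA : A = ∅
      · have hB : B.ncard ≠ 0 := by
          rw [Ne, Set.ncard_eq_zero]; exact fun h' => h ⟨hA, h'⟩
        obtain ⟨b, hb⟩ := Nat.exists_eq_succ_of_ne_zero hB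
        simp [hb, stirling2]
      · have hA : A.ncard ≠ 0 := by
          rw [Ne, Set.ncard_eq_zero]; exact hA
        rw [Nat.descFactorial_of_lt (by omega)]; simp
  | succ k ih =>
    intro A B hAB
    rw [card_cons, FF_rec]
    have hd : ∀ d : D, Nat.card {τ : Fin k → D // PP (k+1) A B (Fin.cons d τ : Fin (k+1) → D)} =
        (if d ∈ A then FF k B.ncard (A.ncard - 1) else 0) +
        (if d ∈ B then FF k B.ncard A.ncard + FF k (B.ncard - 1) A.ncard else 0) := by
      intro d
      by_cases hA : d ∈ A
      · have hB : d ∉ B := fun h => Set.disjoint_left.1 hAB hA h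
        simp only [PP_cons_A k A B hAB d hA, hA, hB, if_true, if_false, add_zero]
        rw [ih _ _ (hAB.mono_left Set.diff_subset), Set.ncard_diff_singleton_of_mem hA]
      · by_cases hB : d ∈ B
        · simp only [PP_cons_B k A B hAB d hB, hA, hB, if_true, if_false, zero_add]
          rw [← ih A B hAB, ← Set.ncard_diff_singleton_of_mem hB,
            ← ih _ _ (hAB.mono_right Set.diff_subset)]
          simp only [Nat.card_eq_fintype_card]
          apply Fintype.card_subtype_or_disjoint
          rw [Pi.disjoint_iff]
          intro τ
          rw [disjoint_iff_inf_le]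
          intro hc
          have h1 := hc.1.1.symm.trans hc.2.1
          have := (Set.ext_iff.1 h1 d).1 (Or.inr hB)
          simp [hA] at this
        · simp only [hA, hB, if_false, add_zero]
          rw [Nat.card_eq_zero]; left
          constructor
          rintro ⟨τ, h⟩
          rw [PP_cons] at h
          have := h.1 ▸ Set.mem_insert d _
          exact this.elim hA hB
    simp only [hd, Finset.sum_add_distrib, Finset.sum_ite, Finset.sum_const_zero, add_zero,
      Finset.sum_const, smul_eq_mul]
    have : ∀ X : Set D, (Finset.univ.filter (· ∈ X)).card = X.ncard := by
      intro X
      rw [Set.ncard_eq_toFinset_card']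
      congr 1; ext; simp
    rw [this, this]
    ring

/-- Counting `S`-surjective `M`-partitions of the empty graph on `k > |D|` vertices:
with `ℓ = |{i ∈ S : M i i = 1}|`, if `ℓ = |S|` or some distinct `i,j ∈ S` have
`M i j = 1` there are none; otherwise there are `k⁽ℓ⁾·(|S|−ℓ)!·S(k−ℓ,|S|−ℓ)`. -/
theorem stmt7 {D : Type} [Fintype D] (M : D → D → Entry)
    (hsym : ∀ i j, M i j = M j i) (S : Set D) (k : ℕ) (hk : Fintype.card D < k)
    (ℓ : ℕ) (hℓ : ℓ = (S ∩ {i | M i i = Entry.one}).ncard) :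
    ((ℓ = S.ncard ∨ ∃ i ∈ S, ∃ j ∈ S, i ≠ j ∧ M i j = Entry.one) →
      Nat.card {σ : Fin k → D // Set.range σ = S ∧
        ∀ u v : Fin k, u ≠ v → M (σ u) (σ v) ≠ Entry.one} = 0) ∧
    (¬ (ℓ = S.ncard ∨ ∃ i ∈ S, ∃ j ∈ S, i ≠ j ∧ M i j = Entry.one) →
      Nat.card {σ : Fin k → D // Set.range σ = S ∧
        ∀ u v : Fin k, u ≠ v → M (σ u) (σ v) ≠ Entry.one} =
      k.descFactorial ℓ * (S.ncard - ℓ).factorial * stirling2 (k - ℓ) (S.ncard - ℓ)) := by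
  constructor
  · intro h
    rw [Nat.card_eq_zero]; left
    constructor
    rintro ⟨σ, h1, h2⟩
    rcases h with h | ⟨i, hi, j, hj, hij, hM⟩
    · have hS : S ∩ {i | M i i = Entry.one} = S :=
        Set.eq_of_subset_of_ncard_le Set.inter_subset_left (by omega)
      have hinj : Function.Injective σ := by
        intro u v huv
        by_contra hne
        apply h2 u v hne
        rw [← huv]
        have : σ u ∈ S := h1 ▸ Set.mem_range_self u
        rw [← hS] at this
        exact this.2
      have := Fintype.card_le_of_injective σ hinj
      simp at this
      omega
    · rw [← h1] at hi hj
      obtain ⟨u, rfl⟩ := hi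
      obtain ⟨v, rfl⟩ := hj
      exact h2 u v (fun h => hij (by rw [h])) hM
  · intro h
    push Not at h
    obtain ⟨-, h⟩ := h
    have hc := count k (S ∩ {i | M i i = Entry.one}) (S \ (S ∩ {i | M i i = Entry.one}))
      Set.disjoint_sdiff_right
    rw [Set.ncard_diff Set.inter_subset_left, ← hℓ] at hc
    unfold FF at hc
    rw [← hc]
    refine Nat.card_congr (Equiv.subtypeEquivRight fun σ => ?_)
    unfold PP
    rw [Set.union_diff_cancel Set.inter_subset_left]
    refine and_congr_right fun hr => ?_
    have hm : ∀ u, σ u ∈ S := fun u => hr ▸ Set.mem_range_self u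
    constructor
    · intro h2 u v huv hu
      by_contra hne
      apply h2 u v hne
      rw [← huv]; exact hu.2
    · intro h2 u v hne hM
      by_cases huv : σ u = σ v
      · exact hne (h2 u v huv ⟨hm u, by rw [← huv] at hM; exact hM⟩)
      · exact h _ (hm u) _ (hm v) huv hM
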